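/- Let Ω ⊆ ℝ³ be open and let α(x) = α₁(x₁)e₁ + α₂(x₂)e₂ + α₃(x₃)e₃, where α₁, α₂, α₃ : ℝ → ℂ are continuously differentiable, and set v_k := −Dα^{(k)} − α² (k = 0,1,2,3). Suppose g : Ω → ℍ(ℂ) is twice differentiable, g = g₀ + g₁e₁ + g₂e₂ + g₃e₃, and the function f := Dg − gα satisfies Df + fα = 0 on Ω. Then necessarily each component g_k satisfies −Δg_k + v_k g_k = 0 on Ω. -/

import Mathlib

noncomputable section

abbrev HC := Quaternion ℂ

def e1 : HC := ⟨0, 1, 0, 0⟩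
def e2 : HC := ⟨0, 0, 1, 0⟩
def e3 : HC := ⟨0, 0, 0, 1⟩

def pd (k : Fin 3) (g : (Fin 3 → ℝ) → ℂ) (x : Fin 3 → ℝ) : ℂ :=
  fderiv ℝ g x (Pi.single k 1)

def lap (g : (Fin 3 → ℝ) → ℂ) (x : Fin 3 → ℝ) : ℂ :=
  pd 0 (pd 0 g) x + pd 1 (pd 1 g) x + pd 2 (pd 2 g) x

def pdq (k : Fin 3) (f : (Fin 3 → ℝ) → HC) (x : Fin 3 → ℝ) : HC :=
  ⟨pd k (fun y => (f y).re) x, pd k (fun y => (f y).imI) x,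
   pd k (fun y => (f y).imJ) x, pd k (fun y => (f y).imK) x⟩

def Dq (f : (Fin 3 → ℝ) → HC) (x : Fin 3 → ℝ) : HC :=
  e1 * pdq 0 f x + e2 * pdq 1 f x + e3 * pdq 2 f x

def lapq (f : (Fin 3 → ℝ) → HC) (x : Fin 3 → ℝ) : HC :=
  ⟨lap (fun y => (f y).re) x, lap (fun y => (f y).imI) x,
   lap (fun y => (f y).imJ) x, lap (fun y => (f y).imK) x⟩

def QDiffOn (f : (Fin 3 → ℝ) → HC) (Ω : Set (Fin 3 → ℝ)) : Prop :=
  DifferentiableOn ℝ (fun y => (f y).re) Ω ∧ DifferentiableOn ℝ (fun y => (f y).imI) Ω ∧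
  DifferentiableOn ℝ (fun y => (f y).imJ) Ω ∧ DifferentiableOn ℝ (fun y => (f y).imK) Ω

def QC2On (f : (Fin 3 → ℝ) → HC) (Ω : Set (Fin 3 → ℝ)) : Prop :=
  ContDiffOn ℝ 2 (fun y => (f y).re) Ω ∧ ContDiffOn ℝ 2 (fun y => (f y).imI) Ω ∧
  ContDiffOn ℝ 2 (fun y => (f y).imJ) Ω ∧ ContDiffOn ℝ 2 (fun y => (f y).imK) Ω


/-- Build a biquaternion from its four complex components. -/
def quat (a b c d : ℂ) : HC := ⟨a, b, c, d⟩

/-- The diagonal purely vectorial function `α(x) = α₁(x₁)e₁ + α₂(x₂)e₂ + α₃(x₃)e₃`. -/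
def dal (a1 a2 a3 : ℝ → ℂ) (x : Fin 3 → ℝ) : HC :=
  quat 0 (a1 (x 0)) (a2 (x 1)) (a3 (x 2))

/-- `s = α₁² + α₂² + α₃²` (so that `α² = −s`). -/
def sq3 (a1 a2 a3 : ℝ → ℂ) (x : Fin 3 → ℝ) : ℂ :=
  a1 (x 0) ^ 2 + a2 (x 1) ^ 2 + a3 (x 2) ^ 2

/-- The scalar potentials `v_k = −Dα^{(k)} − α²`, written explicitly. -/
def vpot (a1 a2 a3 : ℝ → ℂ) : Fin 4 → (Fin 3 → ℝ) → ℂ :=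
  ![fun x => deriv a1 (x 0) + deriv a2 (x 1) + deriv a3 (x 2) + sq3 a1 a2 a3 x,
    fun x => deriv a1 (x 0) - deriv a2 (x 1) - deriv a3 (x 2) + sq3 a1 a2 a3 x,
    fun x => -deriv a1 (x 0) + deriv a2 (x 1) - deriv a3 (x 2) + sq3 a1 a2 a3 x,
    fun x => -deriv a1 (x 0) - deriv a2 (x 1) + deriv a3 (x 2) + sq3 a1 a2 a3 x]

/-- The scalar potentials `w_k = Dα^{(k)} − α²`, written explicitly. -/
def wpot (a1 a2 a3 : ℝ → ℂ) : Fin 4 → (Fin 3 → ℝ) → ℂ :=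
  ![fun x => -(deriv a1 (x 0) + deriv a2 (x 1) + deriv a3 (x 2)) + sq3 a1 a2 a3 x,
    fun x => -deriv a1 (x 0) + deriv a2 (x 1) + deriv a3 (x 2) + sq3 a1 a2 a3 x,
    fun x => deriv a1 (x 0) - deriv a2 (x 1) + deriv a3 (x 2) + sq3 a1 a2 a3 x,
    fun x => deriv a1 (x 0) + deriv a2 (x 1) - deriv a3 (x 2) + sq3 a1 a2 a3 x]

/-- The `k`-th complex component of a biquaternion. -/
def qc (k : Fin 4) (q : HC) : ℂ := ![q.re, q.imI, q.imJ, q.imK] k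

/-!
Since `D² = -Δ` and `D (g α) = (D g) α + ∑ₖ eₖ g ∂ₖα`, the first-order terms cancel in
`(D + M^α)(D - M^α) g = -Δ g - ∑ₖ eₖ g ∂ₖα - g α²`. For diagonal `α` one has `∂ₖα = αₖ' eₖ`,
and `q ↦ eₖ q eₖ` only changes signs of components; hence the right-hand side decouples into
the four Schrödinger operators `-Δ + vₖ`.
-/

open scoped Topology Quaternion

section TwiceDifferentiable

variable {E F : Type*} [NormedAddCommGroup E] [NormedSpace ℝ E]
  [NormedAddCommGroup F] [NormedSpace ℝ F] {f : E → F} {x : E}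

/-- Twice (Fréchet) differentiability at a point: `f` is differentiable near `x` and its
derivative is differentiable at `x`. -/
def TwiceDifferentiableAt (f : E → F) (x : E) : Prop :=
  (∀ᶠ y in 𝓝 x, DifferentiableAt ℝ f y) ∧ DifferentiableAt ℝ (fderiv ℝ f) x

lemma TwiceDifferentiableAt.of_contDiffAt (hf : ContDiffAt ℝ 2 f x) :
    TwiceDifferentiableAt f x :=
  ⟨(hf.eventually (by simp)).mono fun _ hy => hy.differentiableAt (by simp),
    (hf.fderiv_right (m := 1) (by norm_num)).differentiableAt (by simp)⟩

lemma TwiceDifferentiableAt.differentiableAt (hf : TwiceDifferentiableAt f x) :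
    DifferentiableAt ℝ f x :=
  hf.1.self_of_nhds

lemma TwiceDifferentiableAt.isSymmSndFDerivAt (hf : TwiceDifferentiableAt f x) :
    IsSymmSndFDerivAt ℝ f x :=
  second_derivative_symmetric_of_eventually
    (hf.1.mono fun _ hy => hy.hasFDerivAt) hf.2.hasFDerivAt

end TwiceDifferentiable

section PartialDerivative

variable {f h : (Fin 3 → ℝ) → ℂ} {x : Fin 3 → ℝ}

lemma pd_const (k : Fin 3) (c : ℂ) (x : Fin 3 → ℝ) : pd k (fun _ => c) x = 0 := by
  simp [pd]

lemma pd_add (k : Fin 3) (hf : DifferentiableAt ℝ f x) (hh : DifferentiableAt ℝ h x) :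
    pd k (fun y => f y + h y) x = pd k f x + pd k h x := by
  simp [pd, fderiv_fun_add hf hh]

lemma pd_sub (k : Fin 3) (hf : DifferentiableAt ℝ f x) (hh : DifferentiableAt ℝ h x) :
    pd k (fun y => f y - h y) x = pd k f x - pd k h x := by
  simp [pd, fderiv_fun_sub hf hh]

lemma pd_mul (k : Fin 3) (hf : DifferentiableAt ℝ f x) (hh : DifferentiableAt ℝ h x) :
    pd k (fun y => f y * h y) x = f x * pd k h x + h x * pd k f x := by
  simp [pd, fderiv_fun_mul hf hh]

lemma pd_comp_apply (k j : Fin 3) {a : ℝ → ℂ} (ha : DifferentiableAt ℝ a (x j)) :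
    pd k (fun y => a (y j)) x = if j = k then deriv a (x j) else 0 := by
  have hproj : HasFDerivAt (fun y : Fin 3 → ℝ => y j)
      (ContinuousLinearMap.proj j : (Fin 3 → ℝ) →L[ℝ] ℝ) x :=
    hasFDerivAt_apply j x
  have hcomp := ha.hasFDerivAt.comp x hproj
  rw [pd, show fderiv ℝ (fun y => a (y j)) x = _ from hcomp.fderiv]
  simp [Pi.single_apply]

lemma TwiceDifferentiableAt.differentiableAt_pd (hf : TwiceDifferentiableAt f x) (k : Fin 3) :
    DifferentiableAt ℝ (pd k f) x :=
  hf.2.clm_apply (differentiableAt_const _)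

lemma TwiceDifferentiableAt.pd_comm (hf : TwiceDifferentiableAt f x) (i j : Fin 3) :
    pd i (pd j f) x = pd j (pd i f) x := by
  have pd_pd_eq (i j : Fin 3) :
      pd i (pd j f) x = fderiv ℝ (fderiv ℝ f) x (Pi.single i 1) (Pi.single j 1) := by
    change fderiv ℝ (fun y => fderiv ℝ f y (Pi.single j 1)) x (Pi.single i 1) = _
    simp [fderiv_clm_apply hf.2 (differentiableAt_const _)]
  rw [pd_pd_eq, pd_pd_eq, hf.isSymmSndFDerivAt]

end PartialDerivative

section Components

lemma e1_eq_quat : e1 = quat 0 1 0 0 := rfl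
lemma e2_eq_quat : e2 = quat 0 0 1 0 := rfl
lemma e3_eq_quat : e3 = quat 0 0 0 1 := rfl

@[simp] lemma re_quat (a b c d : ℂ) : (quat a b c d).re = a := rfl
@[simp] lemma imI_quat (a b c d : ℂ) : (quat a b c d).imI = b := rfl
@[simp] lemma imJ_quat (a b c d : ℂ) : (quat a b c d).imJ = c := rfl
@[simp] lemma imK_quat (a b c d : ℂ) : (quat a b c d).imK = d := rfl

lemma ext_qc {p q : HC} (h : ∀ k, qc k p = qc k q) : p = q :=
  QuaternionAlgebra.ext (h 0) (h 1) (h 2) (h 3)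

lemma eq_zero_iff_qc {q : HC} : q = 0 ↔ ∀ k, qc k q = 0 :=
  ⟨by rintro rfl k; fin_cases k <;> rfl,
    fun h => QuaternionAlgebra.ext (h 0) (h 1) (h 2) (h 3)⟩

lemma qc_add (k : Fin 4) (p q : HC) : qc k (p + q) = qc k p + qc k q := by
  fin_cases k <;> rfl

lemma qc_sub (k : Fin 4) (p q : HC) : qc k (p - q) = qc k p - qc k q := by
  fin_cases k <;> rfl

lemma qc_neg (k : Fin 4) (q : HC) : qc k (-q) = -qc k q := by
  fin_cases k <;> rfl

lemma qc_smul (k : Fin 4) (c : ℂ) (q : HC) : qc k (c • q) = c * qc k q := by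
  fin_cases k <;> rfl

lemma pdq_eq_quat (k : Fin 3) (f : (Fin 3 → ℝ) → HC) (x : Fin 3 → ℝ) :
    pdq k f x = quat (pd k (fun y => (f y).re) x) (pd k (fun y => (f y).imI) x)
      (pd k (fun y => (f y).imJ) x) (pd k (fun y => (f y).imK) x) :=
  rfl

lemma qc_pdq (j : Fin 4) (k : Fin 3) (f : (Fin 3 → ℝ) → HC) (x : Fin 3 → ℝ) :
    qc j (pdq k f x) = pd k (fun y => qc j (f y)) x := by
  fin_cases j <;> rfl

lemma qc_lapq (k : Fin 4) (f : (Fin 3 → ℝ) → HC) (x : Fin 3 → ℝ) :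
    qc k (lapq f x) = lap (fun y => qc k (f y)) x := by
  fin_cases k <;> rfl

end Components

section QuaternionCalculus

/-- Pointwise version of `QDiffOn`: each complex component is real differentiable at `x`. -/
def QDiffAt (f : (Fin 3 → ℝ) → HC) (x : Fin 3 → ℝ) : Prop :=
  ∀ k, DifferentiableAt ℝ (fun y => qc k (f y)) x

/-- Each complex component is twice real differentiable at `x`. -/
def QTwiceDiffAt (f : (Fin 3 → ℝ) → HC) (x : Fin 3 → ℝ) : Prop :=
  ∀ k, TwiceDifferentiableAt (fun y => qc k (f y)) x

variable {f h : (Fin 3 → ℝ) → HC} {x : Fin 3 → ℝ}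

lemma qDiffAt_iff : QDiffAt f x ↔
    DifferentiableAt ℝ (fun y => (f y).re) x ∧ DifferentiableAt ℝ (fun y => (f y).imI) x ∧
    DifferentiableAt ℝ (fun y => (f y).imJ) x ∧ DifferentiableAt ℝ (fun y => (f y).imK) x := by
  simp [QDiffAt, Fin.forall_fin_succ, qc]

lemma QC2On.qTwiceDiffAt {Ω : Set (Fin 3 → ℝ)} (hf : QC2On f Ω) (hΩ : Ω ∈ 𝓝 x) :
    QTwiceDiffAt f x := by
  obtain ⟨hre, hI, hJ, hK⟩ := hf
  intro k
  apply TwiceDifferentiableAt.of_contDiffAt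
  fin_cases k
  exacts [hre.contDiffAt hΩ, hI.contDiffAt hΩ, hJ.contDiffAt hΩ, hK.contDiffAt hΩ]

lemma QTwiceDiffAt.qDiffAt (hf : QTwiceDiffAt f x) : QDiffAt f x :=
  fun k => (hf k).differentiableAt

lemma QTwiceDiffAt.qDiffAt_pdq (hf : QTwiceDiffAt f x) (k : Fin 3) : QDiffAt (pdq k f) x := by
  intro j
  simpa only [qc_pdq] using (hf j).differentiableAt_pd k

lemma QTwiceDiffAt.pdq_comm (hf : QTwiceDiffAt f x) (i j : Fin 3) :
    pdq i (pdq j f) x = pdq j (pdq i f) x := by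
  refine ext_qc fun k => ?_
  simpa only [qc_pdq] using (hf k).pd_comm i j

lemma QDiffAt.const (q : HC) (x : Fin 3 → ℝ) : QDiffAt (fun _ => q) x :=
  fun _ => differentiableAt_const _

lemma QDiffAt.add (hf : QDiffAt f x) (hh : QDiffAt h x) : QDiffAt (fun y => f y + h y) x := by
  intro k
  simpa only [qc_add] using (hf k).fun_add (hh k)

lemma QDiffAt.mul (hf : QDiffAt f x) (hh : QDiffAt h x) : QDiffAt (fun y => f y * h y) x := by
  obtain ⟨hf_re, hf_imI, hf_imJ, hf_imK⟩ := qDiffAt_iff.mp hf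
  obtain ⟨hh_re, hh_imI, hh_imJ, hh_imK⟩ := qDiffAt_iff.mp hh
  refine qDiffAt_iff.mpr ⟨?_, ?_, ?_, ?_⟩ <;>
    simp only [Quaternion.re_mul, Quaternion.imI_mul, Quaternion.imJ_mul, Quaternion.imK_mul] <;>
    fun_prop

lemma pdq_const (k : Fin 3) (q : HC) (x : Fin 3 → ℝ) : pdq k (fun _ => q) x = 0 := by
  refine eq_zero_iff_qc.mpr fun j => ?_
  rw [qc_pdq, pd_const]

lemma pdq_add (k : Fin 3) (hf : QDiffAt f x) (hh : QDiffAt h x) :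
    pdq k (fun y => f y + h y) x = pdq k f x + pdq k h x := by
  refine ext_qc fun j => ?_
  simp only [qc_add, qc_pdq, pd_add k (hf j) (hh j)]

lemma pdq_sub (k : Fin 3) (hf : QDiffAt f x) (hh : QDiffAt h x) :
    pdq k (fun y => f y - h y) x = pdq k f x - pdq k h x := by
  refine ext_qc fun j => ?_
  simp only [qc_sub, qc_pdq, pd_sub k (hf j) (hh j)]

lemma pdq_mul (k : Fin 3) (hf : QDiffAt f x) (hh : QDiffAt h x) :
    pdq k (fun y => f y * h y) x = pdq k f x * h x + f x * pdq k h x := by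
  obtain ⟨hf_re, hf_imI, hf_imJ, hf_imK⟩ := qDiffAt_iff.mp hf
  obtain ⟨hh_re, hh_imI, hh_imJ, hh_imK⟩ := qDiffAt_iff.mp hh
  ext <;>
    simp (disch := fun_prop) only [pdq_eq_quat, re_quat, imI_quat, imJ_quat, imK_quat,
      Quaternion.re_add, Quaternion.imI_add, Quaternion.imJ_add, Quaternion.imK_add,
      Quaternion.re_mul, Quaternion.imI_mul, Quaternion.imJ_mul, Quaternion.imK_mul,
      pd_add, pd_sub, pd_mul] <;>
    ring

lemma pdq_const_mul (k : Fin 3) (q : HC) (hf : QDiffAt f x) :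
    pdq k (fun y => q * f y) x = q * pdq k f x := by
  rw [pdq_mul k (.const q x) hf, pdq_const, zero_mul, zero_add]

end QuaternionCalculus

section MoisilTheodoresco

lemma e1_mul_e1_mul (q : HC) : e1 * (e1 * q) = -q := by
  ext <;> simp [e1_eq_quat]

lemma e2_mul_e2_mul (q : HC) : e2 * (e2 * q) = -q := by
  ext <;> simp [e2_eq_quat]

lemma e3_mul_e3_mul (q : HC) : e3 * (e3 * q) = -q := by
  ext <;> simp [e3_eq_quat]

lemma e2_mul_e1_mul (q : HC) : e2 * (e1 * q) = -(e1 * (e2 * q)) := by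
  ext <;> simp [e1_eq_quat, e2_eq_quat]

lemma e3_mul_e1_mul (q : HC) : e3 * (e1 * q) = -(e1 * (e3 * q)) := by
  ext <;> simp [e1_eq_quat, e3_eq_quat]

lemma e3_mul_e2_mul (q : HC) : e3 * (e2 * q) = -(e2 * (e3 * q)) := by
  ext <;> simp [e2_eq_quat, e3_eq_quat]

lemma lapq_eq_sum_pdq_pdq (f : (Fin 3 → ℝ) → HC) (x : Fin 3 → ℝ) :
    lapq f x = pdq 0 (pdq 0 f) x + pdq 1 (pdq 1 f) x + pdq 2 (pdq 2 f) x := rfl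

variable {f h α : (Fin 3 → ℝ) → HC} {x : Fin 3 → ℝ}

lemma QTwiceDiffAt.qDiffAt_Dq (hf : QTwiceDiffAt f x) : QDiffAt (Dq f) x :=
  have hterm (q : HC) (k : Fin 3) := (QDiffAt.const q x).mul (hf.qDiffAt_pdq k)
  ((hterm e1 0).add (hterm e2 1)).add (hterm e3 2)

lemma Dq_sub (hf : QDiffAt f x) (hh : QDiffAt h x) :
    Dq (fun y => f y - h y) x = Dq f x - Dq h x := by
  simp only [Dq, pdq_sub _ hf hh, mul_sub]
  abel

lemma Dq_mul (hf : QDiffAt f x) (hh : QDiffAt h x) :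
    Dq (fun y => f y * h y) x = Dq f x * h x +
      (e1 * f x * pdq 0 h x + e2 * f x * pdq 1 h x + e3 * f x * pdq 2 h x) := by
  simp only [Dq, pdq_mul _ hf hh]
  noncomm_ring

lemma QTwiceDiffAt.pdq_Dq (hf : QTwiceDiffAt f x) (k : Fin 3) :
    pdq k (Dq f) x =
      e1 * pdq k (pdq 0 f) x + e2 * pdq k (pdq 1 f) x + e3 * pdq k (pdq 2 f) x := by
  have hterm (q : HC) (j : Fin 3) : QDiffAt (fun y => q * pdq j f y) x :=
    (QDiffAt.const q x).mul (hf.qDiffAt_pdq j)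
  calc pdq k (Dq f) x
      = pdq k (fun y => e1 * pdq 0 f y) x + pdq k (fun y => e2 * pdq 1 f y) x +
          pdq k (fun y => e3 * pdq 2 f y) x := by
        rw [← pdq_add k (hterm e1 0) (hterm e2 1),
          ← pdq_add k ((hterm e1 0).add (hterm e2 1)) (hterm e3 2)]
        rfl
    _ = _ := by simp only [pdq_const_mul k _ (hf.qDiffAt_pdq _)]

lemma QTwiceDiffAt.Dq_Dq (hf : QTwiceDiffAt f x) : Dq (Dq f) x = -lapq f x := by
  rw [Dq, hf.pdq_Dq, hf.pdq_Dq, hf.pdq_Dq, hf.pdq_comm 1 0, hf.pdq_comm 2 0, hf.pdq_comm 2 1,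
    lapq_eq_sum_pdq_pdq]
  simp only [mul_add, e1_mul_e1_mul, e2_mul_e2_mul, e3_mul_e3_mul, e2_mul_e1_mul, e3_mul_e1_mul,
    e3_mul_e2_mul]
  abel

lemma Dq_add_mul_Dq_sub_mul (hf : QTwiceDiffAt f x) (hα : QDiffAt α x) :
    Dq (fun y => Dq f y - f y * α y) x + (Dq f x - f x * α x) * α x =
      -lapq f x -
        (e1 * f x * pdq 0 α x + e2 * f x * pdq 1 α x + e3 * f x * pdq 2 α x) -
        f x * (α x * α x) := by
  rw [Dq_sub hf.qDiffAt_Dq (hf.qDiffAt.mul hα), hf.Dq_Dq, Dq_mul hf.qDiffAt hα,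
    sub_mul, mul_assoc (f x)]
  abel

end MoisilTheodoresco

section Diagonal

variable {a1 a2 a3 : ℝ → ℂ} {x : Fin 3 → ℝ}

lemma qDiffAt_dal (ha1 : DifferentiableAt ℝ a1 (x 0)) (ha2 : DifferentiableAt ℝ a2 (x 1))
    (ha3 : DifferentiableAt ℝ a3 (x 2)) : QDiffAt (dal a1 a2 a3) x := by
  have hcoord {a : ℝ → ℂ} (j : Fin 3) (ha : DifferentiableAt ℝ a (x j)) :
      DifferentiableAt ℝ (fun y : Fin 3 → ℝ => a (y j)) x :=
    ha.comp x (differentiableAt_apply j x)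
  exact qDiffAt_iff.mpr ⟨differentiableAt_const _, hcoord 0 ha1, hcoord 1 ha2, hcoord 2 ha3⟩

lemma pdq_dal (k : Fin 3) (ha1 : DifferentiableAt ℝ a1 (x 0))
    (ha2 : DifferentiableAt ℝ a2 (x 1)) (ha3 : DifferentiableAt ℝ a3 (x 2)) :
    pdq k (dal a1 a2 a3) x =
      ![e1 * ↑(deriv a1 (x 0)), e2 * ↑(deriv a2 (x 1)), e3 * ↑(deriv a3 (x 2))] k := by
  simp only [pdq_eq_quat, dal, re_quat, imI_quat, imJ_quat, imK_quat, pd_const,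
    pd_comp_apply k _ ha1, pd_comp_apply k _ ha2, pd_comp_apply k _ ha3]
  fin_cases k <;> ext <;> simp [e1_eq_quat, e2_eq_quat, e3_eq_quat]

lemma dal_mul_dal (a1 a2 a3 : ℝ → ℂ) (x : Fin 3 → ℝ) :
    dal a1 a2 a3 x * dal a1 a2 a3 x = ((-sq3 a1 a2 a3 x : ℂ) : HC) := by
  ext <;>
    simp only [dal, sq3, re_quat, imI_quat, imJ_quat, imK_quat, Quaternion.re_mul,
      Quaternion.imI_mul, Quaternion.imJ_mul, Quaternion.imK_mul, Quaternion.re_coe,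
      Quaternion.imI_coe, Quaternion.imJ_coe, Quaternion.imK_coe] <;>
    ring

/-- The sign by which `q ↦ e_{j+1} q e_{j+1}` (the negative of the involution `q^{(j+1)}`)
multiplies the `k`-th component; `j : Fin 3` numbers the units from zero. -/
def sandwichSign (j : Fin 3) : Fin 4 → ℂ :=
  ![![-1, -1, 1, 1], ![-1, 1, -1, 1], ![-1, 1, 1, -1]] j

lemma qc_e1_mul_mul_e1 (k : Fin 4) (q : HC) : qc k (e1 * q * e1) = sandwichSign 0 k * qc k q := by
  fin_cases k <;> simp [qc, e1_eq_quat, sandwichSign]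

lemma qc_e2_mul_mul_e2 (k : Fin 4) (q : HC) : qc k (e2 * q * e2) = sandwichSign 1 k * qc k q := by
  fin_cases k <;> simp [qc, e2_eq_quat, sandwichSign]

lemma qc_e3_mul_mul_e3 (k : Fin 4) (q : HC) : qc k (e3 * q * e3) = sandwichSign 2 k * qc k q := by
  fin_cases k <;> simp [qc, e3_eq_quat, sandwichSign]

lemma vpot_eq_sandwichSign (a1 a2 a3 : ℝ → ℂ) (k : Fin 4) (x : Fin 3 → ℝ) :
    vpot a1 a2 a3 k x =
      -(sandwichSign 0 k * deriv a1 (x 0) + sandwichSign 1 k * deriv a2 (x 1) +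
        sandwichSign 2 k * deriv a3 (x 2)) + sq3 a1 a2 a3 x := by
  fin_cases k <;>
    simp only [vpot, sandwichSign, Fin.zero_eta, Fin.mk_one, Fin.reduceFinMk, Matrix.cons_val] <;>
    ring

variable {g : (Fin 3 → ℝ) → HC}

lemma Dq_add_mul_Dq_sub_mul_dal (ha1 : DifferentiableAt ℝ a1 (x 0))
    (ha2 : DifferentiableAt ℝ a2 (x 1)) (ha3 : DifferentiableAt ℝ a3 (x 2))
    (hg : QTwiceDiffAt g x) :
    Dq (fun y => Dq g y - g y * dal a1 a2 a3 y) x +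
        (Dq g x - g x * dal a1 a2 a3 x) * dal a1 a2 a3 x =
      -lapq g x -
        (deriv a1 (x 0) • (e1 * g x * e1) + deriv a2 (x 1) • (e2 * g x * e2) +
          deriv a3 (x 2) • (e3 * g x * e3)) +
        sq3 a1 a2 a3 x • g x := by
  rw [Dq_add_mul_Dq_sub_mul hg (qDiffAt_dal ha1 ha2 ha3), dal_mul_dal]
  simp only [pdq_dal _ ha1 ha2 ha3, Matrix.cons_val, ← mul_assoc]
  simp only [Quaternion.mul_coe_eq_smul, neg_smul, sub_neg_eq_add]

lemma qc_Dq_add_mul_Dq_sub_mul_dal (ha1 : DifferentiableAt ℝ a1 (x 0))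
    (ha2 : DifferentiableAt ℝ a2 (x 1)) (ha3 : DifferentiableAt ℝ a3 (x 2))
    (hg : QTwiceDiffAt g x) (k : Fin 4) :
    qc k (Dq (fun y => Dq g y - g y * dal a1 a2 a3 y) x +
        (Dq g x - g x * dal a1 a2 a3 x) * dal a1 a2 a3 x) =
      -lap (fun y => qc k (g y)) x + vpot a1 a2 a3 k x * qc k (g x) := by
  rw [Dq_add_mul_Dq_sub_mul_dal ha1 ha2 ha3 hg, vpot_eq_sandwichSign]
  simp only [qc_add, qc_sub, qc_neg, qc_smul, qc_lapq, qc_e1_mul_mul_e1, qc_e2_mul_mul_e2,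
    qc_e3_mul_mul_e3]
  ring

theorem potential_components_necessity_general (ha1 : DifferentiableAt ℝ a1 (x 0))
    (ha2 : DifferentiableAt ℝ a2 (x 1)) (ha3 : DifferentiableAt ℝ a3 (x 2))
    (hg : QTwiceDiffAt g x) :
    Dq (fun y => Dq g y - g y * dal a1 a2 a3 y) x +
        (Dq g x - g x * dal a1 a2 a3 x) * dal a1 a2 a3 x = 0 ↔
      ∀ k : Fin 4, -lap (fun y => qc k (g y)) x + vpot a1 a2 a3 k x * qc k (g x) = 0 := by
  simp only [eq_zero_iff_qc, qc_Dq_add_mul_Dq_sub_mul_dal ha1 ha2 ha3 hg]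

end Diagonal

/-- Proposition gsol of the paper: if `f = (D − M^α)g` solves
`Df + fα = 0` with diagonal `α`, then necessarily each component `g_k` solves
`−Δg_k + v_k g_k = 0`. -/
theorem potential_components_necessity
    (Ω : Set (Fin 3 → ℝ)) (hΩ : IsOpen Ω)
    (a1 a2 a3 : ℝ → ℂ)
    (ha1 : ContDiff ℝ 1 a1) (ha2 : ContDiff ℝ 1 a2) (ha3 : ContDiff ℝ 1 a3)
    (g : (Fin 3 → ℝ) → HC) (hg : QC2On g Ω)
    (hfeq : ∀ x ∈ Ω,
      Dq (fun y => Dq g y - g y * dal a1 a2 a3 y) x +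
        (Dq g x - g x * dal a1 a2 a3 x) * dal a1 a2 a3 x = 0) :
    ∀ k : Fin 4, ∀ x ∈ Ω,
      -lap (fun y => qc k (g y)) x + vpot a1 a2 a3 k x * qc k (g x) = 0 := fun k x hx =>
  (potential_components_necessity_general (ha1.differentiable one_ne_zero _)
    (ha2.differentiable one_ne_zero _) (ha3.differentiable one_ne_zero _)
    (hg.qTwiceDiffAt (hΩ.mem_nhds hx))).mp (hfeq x hx) k
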